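/- arXiv:1607.05121 — 3 statements merged into one kernel-verified Lean document; each statement's English description precedes it below -/
import Mathlib

section
/- Let λ be a nonzero complex number and m a positive integer. Then the kernel of the m-th power of (S − λ id), acting on the space of complex sequences, equals G_{λ,m}; that is, for a sequence y : ℕ → ℂ, one has (S − λ id)^m y = 0 if and only if there exists a polynomial p with complex coefficients of degree < m such that y n = λ^n · p(n) for all n. -/
/-!
Substituting `y n = c ^ n * z n` turns `S - c` into `c` times the forward difference `Δ`, so that
`(S - c) ^ m y = 0` amounts to `Δ ^ m z = 0` (`shiftOp_sub_pow_apply`). Polynomials of degree `< m`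
are annihilated by `Δ ^ m`. Conversely, if `Δ ^ m z = 0`, the Gregory-Newton formula
`z n = ∑ k, (n choose k) * (Δ ^ k z) 0` stops at `k < m`, and each `n choose k` is a
polynomial of degree `k` in `n` (`exists_poly_of_fwdDiff_iter_eq_zero`).
-/

open Polynomial

/-- The linear map sending a polynomial `p` to the sequence `n ↦ c ^ n * p n`. -/
noncomputable def seqOfPoly (c : ℂ) : Polynomial ℂ →ₗ[ℂ] (ℕ → ℂ) where
  toFun p := fun n => c ^ n * p.eval (n : ℂ)
  map_add' p q := by funext n; simp [mul_add]
  map_smul' a p := by funext n; simp; ring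

/-- `G c m` is the space of sequences `n ↦ c ^ n * p n` with `p` a polynomial of degree `< m`. -/
noncomputable def G (c : ℂ) (m : ℕ) : Submodule ℂ (ℕ → ℂ) :=
  (Polynomial.degreeLT ℂ m).map (seqOfPoly c)

/-- The shift operator on complex sequences, `(S y) n = y (n + 1)`. -/
def shiftOp : Module.End ℂ (ℕ → ℂ) where
  toFun y := fun n => y (n + 1)
  map_add' _ _ := rfl
  map_smul' _ _ := rfl

/-- Conjugation by `n ↦ c ^ n` turns `S - c` into `c` times the forward difference. -/
lemma shiftOp_sub_pow_apply (c : ℂ) (m : ℕ) (z : ℕ → ℂ) :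
    ((shiftOp - c • 1) ^ m) (fun n => c ^ n * z n) =
      fun n => c ^ (n + m) * (fwdDiff 1)^[m] z n := by
  induction m generalizing z with
  | zero => simp
  | succ m ih =>
    have h : (shiftOp - c • 1) (fun n => c ^ n * z n) =
        c • fun n => c ^ n * fwdDiff 1 z n := by
      funext n
      simp [shiftOp, fwdDiff]
      ring
    rw [pow_succ, Module.End.mul_apply, h, map_smul, ih]
    funext n
    simp only [Pi.smul_apply, smul_eq_mul, Function.iterate_succ_apply]
    ring

lemma fwdDiff_iter_eval_natCast_eq_zero {m : ℕ} {p : ℂ[X]} (hp : p.natDegree < m) :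
    (fwdDiff 1)^[m] (fun n : ℕ => p.eval (n : ℂ)) = 0 := by
  funext n
  -- The library fact concerns differences on `ℂ`; it is transferred to `ℕ` by expanding both.
  have h := congrFun (Polynomial.fwdDiff_iter_eq_zero_of_degree_lt hp) (n : ℂ)
  rw [fwdDiff_iter_eq_sum_shift] at h ⊢
  simpa using h

lemma exists_poly_of_fwdDiff_iter_eq_zero {m : ℕ} {z : ℕ → ℂ}
    (hz : (fwdDiff 1)^[m] z = 0) :
    ∃ p : ℂ[X], p.degree < (m : WithBot ℕ) ∧ ∀ n : ℕ, z n = p.eval (n : ℂ) := by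
  have hz' : ∀ k, m ≤ k → (fwdDiff 1)^[k] z 0 = 0 := by
    intro k hk
    obtain ⟨j, rfl⟩ := Nat.exists_eq_add_of_le' hk
    rw [Function.iterate_add_apply, hz, fwdDiff_iter_eq_sum_shift]
    simp
  refine ⟨∑ k ∈ Finset.range m,
    C ((fwdDiff 1)^[k] z 0 / (k.factorial : ℂ)) * descPochhammer ℂ k, ?_, ?_⟩
  · rw [← Polynomial.mem_degreeLT]
    refine Submodule.sum_mem _ fun k hk => ?_
    rw [← Polynomial.smul_eq_C_mul]
    refine Submodule.smul_mem _ _ ?_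
    rw [Polynomial.mem_degreeLT, Polynomial.degree_eq_natDegree
      (monic_descPochhammer ℂ k).ne_zero, descPochhammer_natDegree]
    exact_mod_cast Finset.mem_range.mp hk
  · intro n
    have hN := shift_eq_sum_fwdDiff_iter 1 z n 0
    simp only [zero_add, smul_eq_mul, mul_one, nsmul_eq_mul] at hN
    have hterm : ∀ k, eval (n : ℂ) (C ((fwdDiff 1)^[k] z 0 / (k.factorial : ℂ)) *
        descPochhammer ℂ k) = (n.choose k : ℂ) * (fwdDiff 1)^[k] z 0 := by
      intro k
      have hk : (k.factorial : ℂ) ≠ 0 := by exact_mod_cast k.factorial_ne_zero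
      rw [eval_mul, eval_C, descPochhammer_eval_eq_descFactorial,
        Nat.descFactorial_eq_factorial_mul_choose]
      push_cast
      field_simp
    rw [hN, eval_finsetSum, Finset.sum_congr rfl fun k _ => hterm k]
    -- Both sums equal the one up to `max (n + 1) m`: extra terms vanish through
    -- `n.choose k` on the left and through `hz'` on the right.
    trans ∑ k ∈ Finset.range (max (n + 1) m), (n.choose k : ℂ) * (fwdDiff 1)^[k] z 0
    · refine Finset.sum_subset (Finset.range_mono (le_max_left _ _)) fun k _ hk => ?_
      rw [Nat.choose_eq_zero_of_lt (by simpa using hk)]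
      simp
    · refine (Finset.sum_subset (Finset.range_mono (le_max_right _ _)) fun k _ hk => ?_).symm
      rw [hz' k (by simpa using hk), mul_zero]

/-- The kernel of `(S - c • 1) ^ m` on complex sequences is exactly `G c m`. -/
theorem stmt_5 (c : ℂ) (hc : c ≠ 0) (m : ℕ) (hm : 0 < m) (y : ℕ → ℂ) :
    ((shiftOp - c • 1) ^ m) y = 0 ↔
      ∃ p : Polynomial ℂ, p.degree < (m : WithBot ℕ) ∧
        ∀ n : ℕ, y n = c ^ n * p.eval (n : ℂ) := by
  constructor
  · intro h
    have hy : y = fun n => c ^ n * (y n / c ^ n) := by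
      funext n
      field_simp
    rw [hy, shiftOp_sub_pow_apply] at h
    obtain ⟨p, hp, hzp⟩ := exists_poly_of_fwdDiff_iter_eq_zero (m := m)
      (z := fun n => y n / c ^ n) (by
        funext n
        simpa [hc] using congrFun h n)
    refine ⟨p, hp, fun n => ?_⟩
    rw [← hzp n]
    field_simp
  · rintro ⟨p, hp, hyp⟩
    have hp' : p.natDegree < m := by
      rcases eq_or_ne p 0 with rfl | h0
      · simpa using hm
      · exact (Polynomial.natDegree_lt_iff_degree_lt h0).mpr hp
    rw [funext hyp, shiftOp_sub_pow_apply c m fun n => p.eval (n : ℂ),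
      fwdDiff_iter_eval_natCast_eq_zero hp']
    funext n
    simp
end

section
/- Let V be a subspace of the space of infinitely differentiable functions from ℝ to ℂ that is invariant under differentiation (for every y ∈ V, the derivative y′ belongs to V), let λ be a complex number, let l be a positive integer, and suppose V contains a function of the form t ↦ p(t) · exp(λt) where p is a polynomial with complex coefficients of degree exactly l − 1. Then H_{λ,l} ⊆ V. -/
/-!
Since `(exp (c t) q)' - c exp (c t) q = exp (c t) q'`, the set of polynomials `q` with
`exp (c t) q ∈ V` is a subspace closed under `Polynomial.derivative`. In characteristic zero,
differentiation lowers the degree by exactly one, so such a subspace containing a polynomial of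
degree `n` contains one of every degree `≤ n`, hence all polynomials of degree `≤ n`
(`degreeLT_le_of_derivative_mem`).
-/

open Polynomial

/-- The linear map sending a polynomial `p` to the function `t ↦ exp (c t) * p t`. -/
noncomputable def funOfPoly (c : ℂ) : Polynomial ℂ →ₗ[ℂ] (ℝ → ℂ) where
  toFun p := fun t => Complex.exp (c * t) * p.eval (t : ℂ)
  map_add' p q := by funext t; simp [mul_add]
  map_smul' a p := by funext t; simp; ring

/-- `H c m` is the space of functions `t ↦ exp (c t) * p t` with `p` a polynomial of degree `< m`. -/
noncomputable def H (c : ℂ) (m : ℕ) : Submodule ℂ (ℝ → ℂ) :=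
  (Polynomial.degreeLT ℂ m).map (funOfPoly c)

theorem deriv_funOfPoly (c : ℂ) (q : Polynomial ℂ) :
    deriv (funOfPoly c q) = c • funOfPoly c q + funOfPoly c (derivative q) := by
  funext t
  have h1 : HasDerivAt (fun z : ℂ => Complex.exp (c * z) * q.eval z)
      (Complex.exp (c * t) * (c * 1) * q.eval (t : ℂ)
        + Complex.exp (c * t) * (derivative q).eval (t : ℂ)) (t : ℂ) :=
    (((hasDerivAt_id (t : ℂ)).const_mul c).cexp).mul (q.hasDerivAt (t : ℂ))
  have h2 : deriv (funOfPoly c q) t = _ := h1.comp_ofReal.deriv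
  rw [h2]
  simp only [funOfPoly, LinearMap.coe_mk, AddHom.coe_mk, Pi.add_apply, Pi.smul_apply, smul_eq_mul]
  ring

/-- A subspace of `ℂ[X]` stable under differentiation that contains a polynomial of degree `n`
contains every polynomial of degree at most `n`. -/
theorem degreeLT_le_of_derivative_mem (W : Submodule ℂ (Polynomial ℂ))
    (hW : ∀ q ∈ W, derivative q ∈ W) (n : ℕ) :
    ∀ q ∈ W, q.degree = n → degreeLT ℂ (n + 1) ≤ W := by
  induction n with
  | zero =>
    intro q hq hd r hr
    have hr0 : r.degree ≤ 0 := by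
      rw [mem_degreeLT, degree_lt_iff_coeff_zero] at hr
      exact (degree_le_iff_coeff_zero r 0).2 fun m hm => hr m (by exact_mod_cast hm)
    have hq0 : q = C (q.coeff 0) := eq_C_of_degree_le_zero (by simp [hd])
    have hne : q.coeff 0 ≠ 0 := coeff_ne_zero_of_eq_degree hd
    have hrq : r = (r.coeff 0 / q.coeff 0) • q := by
      rw [eq_C_of_degree_le_zero hr0, hq0, smul_C]
      simp [hne]
    rw [hrq]
    exact W.smul_mem _ hq
  | succ n ih =>
    intro q hq hd r hr
    have hne : q.coeff (n + 1) ≠ 0 := coeff_ne_zero_of_eq_degree hd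
    have hnat : q.natDegree = n + 1 := natDegree_eq_of_degree_eq_some hd
    have hd' : (derivative q).degree = n := by
      rw [degree_derivative (by omega), hnat]; simp
    -- Subtracting a multiple of `q` cancels the coefficient of degree `n + 1`.
    have hlow : r - (r.coeff (n + 1) / q.coeff (n + 1)) • q ∈ degreeLT ℂ (n + 1) := by
      rw [mem_degreeLT, degree_lt_iff_coeff_zero]
      intro m hm
      rcases hm.eq_or_lt with rfl | hm
      · simp [hne]
      · have hrm : r.coeff m = 0 :=
          (degree_lt_iff_coeff_zero r (n + 1 + 1)).1 (mem_degreeLT.1 hr) m hm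
        have hqm : q.coeff m = 0 := coeff_eq_zero_of_natDegree_lt (by omega)
        simp [hrm, hqm]
    have := W.add_mem (ih _ (hW q hq) hd' hlow)
      (W.smul_mem (r.coeff (n + 1) / q.coeff (n + 1)) hq)
    simpa using this

/-- A differentiation-invariant subspace of smooth functions containing `t ↦ p t * exp (c t)`
with `p` of degree exactly `l - 1` contains all of `H c l`. -/
theorem stmt_12 (V : Submodule ℂ (ℝ → ℂ)) (hsmooth : ∀ y ∈ V, ContDiff ℝ (⊤ : ℕ∞) y)
    (hinv : ∀ y ∈ V, deriv y ∈ V)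
    (c : ℂ) (l : ℕ) (hl : 0 < l)
    (p : Polynomial ℂ) (hp : p.degree = ((l - 1 : ℕ) : WithBot ℕ))
    (hpV : (fun t : ℝ => p.eval (t : ℂ) * Complex.exp (c * t)) ∈ V) :
    H c l ≤ V := by
  have hmem : p ∈ V.comap (funOfPoly c) := by
    rw [Submodule.mem_comap]
    convert hpV using 1
    funext t
    exact mul_comm _ _
  have hder : ∀ q ∈ V.comap (funOfPoly c), derivative q ∈ V.comap (funOfPoly c) := by
    intro q hq
    rw [Submodule.mem_comap] at hq ⊢
    have h := V.sub_mem (hinv _ hq) (V.smul_mem c hq)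
    rwa [deriv_funOfPoly, add_sub_cancel_left] at h
  have h := degreeLT_le_of_derivative_mem _ hder (l - 1) p hmem hp
  rw [Nat.sub_add_cancel hl] at h
  exact Submodule.map_le_iff_le_comap.2 h
end

section
/- Let λ₁, …, λ_s be distinct nonzero complex numbers and l₁, …, l_s positive integers. Then the subspaces G_{λ₁,l₁}, …, G_{λ_s,l_s} of the space of complex sequences are linearly independent: if y₁ + ⋯ + y_s = 0 with yᵢ ∈ G_{λᵢ,lᵢ} for each i, then yᵢ = 0 for all i. -/
/-!
The sequence `n ↦ c ^ n * p n` is a generalized eigenvector of the shift operator for the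
eigenvalue `c`: applying `shiftOp - c` replaces `p` by `c` times its forward difference, and
iterated forward differences of a polynomial eventually vanish (`shiftOp_sub_pow_apply`,
`G_le_maxGenEigenspace`). Generalized eigenspaces of an operator for distinct eigenvalues are
independent, so the spaces `G (c i) (l i)` are too.
-/

open Polynomial

/-- On `n ↦ c ^ n * p n`, the operator `shiftOp - c` acts as `c` times the forward difference of
`p`. -/
lemma shiftOp_sub_pow_apply_s13 (c : ℂ) (p : ℂ[X]) (k n : ℕ) :
    ((shiftOp - c • (1 : Module.End ℂ (ℕ → ℂ))) ^ k) (seqOfPoly c p) n =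
      c ^ (n + k) * (fwdDiff (1 : ℂ))^[k] p.eval (n : ℂ) := by
  induction k generalizing n with
  | zero => simp [seqOfPoly]
  | succ k ih =>
    rw [pow_succ', Module.End.mul_apply]
    change ((shiftOp - c • (1 : Module.End ℂ (ℕ → ℂ))) ^ k) (seqOfPoly c p) (n + 1) -
      c * ((shiftOp - c • (1 : Module.End ℂ (ℕ → ℂ))) ^ k) (seqOfPoly c p) n = _
    rw [ih, ih, Function.iterate_succ_apply', fwdDiff]
    push_cast
    ring

lemma G_le_maxGenEigenspace (c : ℂ) (m : ℕ) : G c m ≤ shiftOp.maxGenEigenspace c := by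
  rintro _ ⟨p, -, rfl⟩
  refine (Module.End.mem_maxGenEigenspace _ _ _).2 ⟨p.natDegree + 1, ?_⟩
  funext n
  rw [shiftOp_sub_pow_apply_s13, Polynomial.fwdDiff_iter_degree_add_one_eq_zero]
  simp

/-- The subspaces `G (c i) (l i)` for distinct nonzero `c i` are linearly independent. -/
theorem stmt_13 (s : ℕ) (c : Fin s → ℂ) (l : Fin s → ℕ)
    (hc : Function.Injective c) (hc0 : ∀ i, c i ≠ 0) (hl : ∀ i, 0 < l i)
    (y : Fin s → (ℕ → ℂ)) (hy : ∀ i, y i ∈ G (c i) (l i)) (hsum : ∑ i, y i = 0) :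
    ∀ i, y i = 0 := by
  have hind := (shiftOp.independent_maxGenEigenspace).comp hc
  intro i
  exact (iSupIndep_iff_finsetSum_eq_zero_imp_eq_zero _).1 hind Finset.univ y
    (fun i _ => G_le_maxGenEigenspace _ _ (hy i)) hsum i (Finset.mem_univ i)
end
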